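/- If A is a complex symmetric positive definite matrix partitioned as a 2×2 block matrix with invertible leading block A₁₁, then the Schur complement A/A₁₁ = A₂₂ − A₂₁ A₁₁⁻¹ A₁₂ is also complex symmetric positive definite. -/

import Mathlib

/-!
The Schur complement `S = A₂₂ - A₂₁ A₁₁⁻¹ A₁₂` is the restriction of the form of `A` to lifted
vectors: for real `y`, the complex vector `z = (-A₁₁⁻¹ A₁₂ y, y)` satisfies `A z = (0, S y)`, so
`z* A z = yᵀ S y`. Being CSPD makes the real and imaginary parts of `z* A z` positive for every
*complex* `z ≠ 0` (`IsCSPD.pos`), since `z* B z = uᵀ B u + vᵀ B v` for real symmetric `B` and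
`z = u + iv`. Conversely, a complex symmetric matrix whose form has positive real and imaginary
parts on nonzero *real* vectors is CSPD (`isCSPD_of_pos`), and `S` is such a matrix.
-/

open Matrix Complex

/-- A complex matrix is CSPD (a Higham matrix) if it is `B + iC` with `B`, `C`
real symmetric positive definite. -/
def IsCSPD {m : Type*} [Fintype m] [DecidableEq m] (A : Matrix m m ℂ) : Prop :=
  ∃ B C : Matrix m m ℝ, B.IsSymm ∧ B.PosDef ∧ C.IsSymm ∧ C.PosDef ∧
    A = B.map (fun x => (x : ℂ)) + Complex.I • C.map (fun x => (x : ℂ))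

theorem IsCSPD.isSymm {m : Type*} [Fintype m] [DecidableEq m] {A : Matrix m m ℂ}
    (hA : IsCSPD A) : A.IsSymm := by
  obtain ⟨B, C, hB, -, hC, -, rfl⟩ := hA
  exact (hB.map _).add ((hC.map _).smul _)

/-- Since `B` is symmetric, the cross terms of `(u - iv)ᵀ B (u + iv)` cancel. -/
theorem star_dotProduct_map_ofReal_mulVec {m : Type*} [Fintype m] {B : Matrix m m ℝ}
    (hB : B.IsSymm) (z : m → ℂ) :
    star z ⬝ᵥ (B.map (fun x => (x : ℂ)) *ᵥ z) =
      (((fun i => (z i).re) ⬝ᵥ (B *ᵥ fun i => (z i).re) +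
        (fun i => (z i).im) ⬝ᵥ (B *ᵥ fun i => (z i).im) : ℝ) : ℂ) := by
  have hcross : (fun i => (z i).re) ⬝ᵥ (B *ᵥ fun i => (z i).im) =
      (fun i => (z i).im) ⬝ᵥ (B *ᵥ fun i => (z i).re) := by
    rw [dotProduct_mulVec, ← mulVec_transpose, hB.eq, dotProduct_comm]
  have hre (i : m) : ((B.map (fun x => (x : ℂ)) *ᵥ z) i).re = (B *ᵥ fun i => (z i).re) i := by
    simp [mulVec, dotProduct]
  have him (i : m) : ((B.map (fun x => (x : ℂ)) *ᵥ z) i).im = (B *ᵥ fun i => (z i).im) i := by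
    simp [mulVec, dotProduct]
  apply Complex.ext
  · simp only [dotProduct, Complex.re_sum, Complex.mul_re, Complex.ofReal_re, hre, him,
      Pi.star_apply, Complex.star_def, Complex.conj_re, Complex.conj_im]
    rw [← Finset.sum_add_distrib]
    exact Finset.sum_congr rfl fun i _ => by ring
  · simp only [dotProduct, Complex.im_sum, Complex.mul_im, Complex.ofReal_im, hre, him,
      Pi.star_apply, Complex.star_def, Complex.conj_re, Complex.conj_im] at hcross ⊢
    rw [Finset.sum_add_distrib, hcross, ← Finset.sum_add_distrib]
    exact Finset.sum_eq_zero fun i _ => by ring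

theorem re_im_form_pos {m : Type*} [Fintype m] {B : Matrix m m ℝ} (hB : B.PosDef)
    {z : m → ℂ} (hz : z ≠ 0) :
    0 < (fun i => (z i).re) ⬝ᵥ (B *ᵥ fun i => (z i).re) +
        (fun i => (z i).im) ⬝ᵥ (B *ᵥ fun i => (z i).im) := by
  have hnonneg (x : m → ℝ) : 0 ≤ x ⬝ᵥ (B *ᵥ x) := by
    simpa using hB.posSemidef.dotProduct_mulVec_nonneg x
  have hpos {x : m → ℝ} (hx : x ≠ 0) : 0 < x ⬝ᵥ (B *ᵥ x) := by
    simpa using hB.dotProduct_mulVec_pos hx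
  by_cases hu : (fun i => (z i).re) = 0
  · refine add_pos_of_nonneg_of_pos (hnonneg _) (hpos fun hv => hz ?_)
    ext i
    exact Complex.ext (congrFun hu i) (congrFun hv i)
  · exact add_pos_of_pos_of_nonneg (hpos hu) (hnonneg _)

theorem IsCSPD.pos {m : Type*} [Fintype m] [DecidableEq m] {A : Matrix m m ℂ}
    (hA : IsCSPD A) {z : m → ℂ} (hz : z ≠ 0) :
    0 < (star z ⬝ᵥ (A *ᵥ z)).re ∧ 0 < (star z ⬝ᵥ (A *ᵥ z)).im := by
  obtain ⟨B, C, hBs, hB, hCs, hC, rfl⟩ := hA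
  rw [add_mulVec, smul_mulVec, dotProduct_add, dotProduct_smul,
    star_dotProduct_map_ofReal_mulVec hBs, star_dotProduct_map_ofReal_mulVec hCs]
  have h1 := re_im_form_pos hB hz
  have h2 := re_im_form_pos hC hz
  constructor
  · simpa only [smul_eq_mul, Complex.add_re, Complex.re_ofReal_mul, Complex.I_mul_re,
      Complex.ofReal_re, Complex.ofReal_im, neg_zero, add_zero] using h1
  · simpa only [smul_eq_mul, Complex.add_im, Complex.I_mul_im,
      Complex.ofReal_re, Complex.ofReal_im, zero_add] using h2

theorem isCSPD_of_pos {m : Type*} [Fintype m] [DecidableEq m] {A : Matrix m m ℂ}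
    (hA : A.IsSymm)
    (hpos : ∀ y : m → ℝ, y ≠ 0 →
      0 < ((fun i => (y i : ℂ)) ⬝ᵥ (A *ᵥ fun i => (y i : ℂ))).re ∧
      0 < ((fun i => (y i : ℂ)) ⬝ᵥ (A *ᵥ fun i => (y i : ℂ))).im) :
    IsCSPD A := by
  have hre : (A.map Complex.re).IsSymm := hA.map _
  have him : (A.map Complex.im).IsSymm := hA.map _
  refine ⟨A.map Complex.re, A.map Complex.im, hre, ?_, him, ?_, ?_⟩
  · refine Matrix.PosDef.of_dotProduct_mulVec_pos (by simpa [IsHermitian] using hre.eq)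
      fun y hy => ?_
    simpa [dotProduct, mulVec] using (hpos y hy).1
  · refine Matrix.PosDef.of_dotProduct_mulVec_pos (by simpa [IsHermitian] using him.eq)
      fun y hy => ?_
    simpa [dotProduct, mulVec] using (hpos y hy).2
  · ext i j
    simp [mul_comm Complex.I, Complex.re_add_im]

/-- If `A = [[A₁₁, A₁₂], [A₂₁, A₂₂]]` is CSPD and the leading block `A₁₁` is
invertible, then the Schur complement `A₂₂ - A₂₁ A₁₁⁻¹ A₁₂` is CSPD. -/
theorem cspd_schur_complement {p q : Type*} [Fintype p] [DecidableEq p]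
    [Fintype q] [DecidableEq q]
    (A11 : Matrix p p ℂ) (A12 : Matrix p q ℂ) (A21 : Matrix q p ℂ) (A22 : Matrix q q ℂ)
    (hA : IsCSPD (Matrix.fromBlocks A11 A12 A21 A22))
    (h11 : IsUnit A11) :
    IsCSPD (A22 - A21 * A11⁻¹ * A12) := by
  obtain ⟨h1, h12, h21, h2⟩ := Matrix.isSymm_fromBlocks_iff.1 hA.isSymm
  apply isCSPD_of_pos
  · rw [IsSymm, transpose_sub, transpose_mul, transpose_mul, transpose_nonsing_inv,
      h1.eq, h2.eq, h12, h21, Matrix.mul_assoc]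
  · intro y hy
    set w : q → ℂ := fun i => (y i : ℂ) with hw
    set x : p → ℂ := -(A11⁻¹ *ᵥ (A12 *ᵥ w)) with hx
    have hz : Sum.elim x w ≠ 0 := by
      intro h
      apply hy
      ext j
      simpa [hw] using congrFun h (Sum.inr j)
    have hstar : star w = w := by
      ext j
      simp [hw]
    have htop : A11 *ᵥ x + A12 *ᵥ w = 0 := by
      rw [hx, mulVec_neg, mulVec_mulVec,
        Matrix.mul_nonsing_inv _ ((Matrix.isUnit_iff_isUnit_det _).1 h11), one_mulVec,
        neg_add_cancel]
    have hbot : A21 *ᵥ x + A22 *ᵥ w = (A22 - A21 * A11⁻¹ * A12) *ᵥ w := by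
      rw [hx, mulVec_neg, sub_mulVec, mulVec_mulVec, mulVec_mulVec, neg_add_eq_sub,
        Matrix.mul_assoc]
    have hform : star (Sum.elim x w) ⬝ᵥ (fromBlocks A11 A12 A21 A22 *ᵥ Sum.elim x w) =
        w ⬝ᵥ ((A22 - A21 * A11⁻¹ * A12) *ᵥ w) := by
      rw [fromBlocks_mulVec, Sum.elim_comp_inl, Sum.elim_comp_inr, htop, hbot]
      have : star (Sum.elim x w) = Sum.elim (star x) (star w) := by
        ext (i | j) <;> rfl
      rw [this, sumElim_dotProduct_sumElim, dotProduct_zero, zero_add, hstar]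
    rw [← hform]
    exact hA.pos hz
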